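/- For every α > 0, the space X_α of functions with summable fractional derivative of order α decomposes as the direct sum of the span of {t^{α−⌈α⌉}, …, t^{α−2}, t^{α−1}} and I^α(L¹[0,b]): every f ∈ X_α can be written in exactly one way as f(t) = a₀ t^{α−⌈α⌉} + ⋯ + a_{⌈α⌉−1} t^{α−1} + I^α φ(t) with a₀,…,a_{⌈α⌉−1} ∈ ℝ and φ ∈ L¹[0,b], and conversely every function of this form belongs to X_α. -/

import Mathlib

open MeasureTheory Set Filter Topology

open Classical in
/-- Riemann–Liouville fractional integral of order `α` with base point `0`;
`RL 0` is the identity operator. -/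
noncomputable def RL (α : ℝ) (f : ℝ → ℝ) : ℝ → ℝ := fun t =>
  if α = 0 then f t
  else (1 / Real.Gamma α) * ∫ s in (0:ℝ)..t, (t - s) ^ (α - 1) * f s

/-- `g ∈ AC[0,b]`: `g t = g 0 + ∫₀ᵗ φ` for some `φ ∈ L¹[0,b]`. -/
def MemAC (b : ℝ) (g : ℝ → ℝ) : Prop :=
  ∃ φ : ℝ → ℝ, IntegrableOn φ (Set.Icc 0 b) volume ∧
    ∀ t ∈ Set.Icc (0:ℝ) b, g t = g 0 + ∫ s in (0:ℝ)..t, φ s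

/-- `g ∈ AC^n[0,b]`: `g ∈ C^{n-1}[0,b]` and `D^{n-1} g ∈ AC[0,b]`. -/
def MemACn (b : ℝ) (n : ℕ) (g : ℝ → ℝ) : Prop :=
  ContDiffOn ℝ (n - 1 : ℕ) g (Set.Icc 0 b) ∧
    MemAC b (iteratedDerivWithin (n - 1) g (Set.Icc 0 b))

/-- `f ∈ X_α`, the space of functions with summable fractional derivative of order `α`:
`f ∈ L¹[0,b]` and (for `α ≠ 0`) `I^{⌈α⌉-α} f ∈ AC^{⌈α⌉}[0,b]`
(as an element of `L¹`, i.e. it has an `AC^{⌈α⌉}` representative); `X_0 = L¹[0,b]`. -/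
def MemX (b : ℝ) (α : ℝ) (f : ℝ → ℝ) : Prop :=
  IntegrableOn f (Set.Icc 0 b) volume ∧
    (α ≠ 0 → ∃ g : ℝ → ℝ,
      g =ᵐ[volume.restrict (Set.Icc 0 b)] RL ((⌈α⌉₊ : ℝ) - α) f ∧ MemACn b ⌈α⌉₊ g)

/-!
Extended by zero to `(-∞, 0]`, the function `I^γ f` is the convolution of `f` with the kernel
`t^{γ-1} / Γ(γ)`, so associativity of convolution and the Beta integral give
`I^γ I^δ = I^{γ+δ}`. By repeated integration, the functions in `AC^n` are exactly the Taylor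
expansions `∑_{k=1}^n d_k t^{n-k} / Γ(n-k+1) + I^n φ`, and repeated differentiation recovers `d`
and `φ`. In particular `I^n` is injective on `L¹`, hence so is every `I^γ`, because
`I^{⌈γ⌉-γ} I^γ = I^{⌈γ⌉}`. Finally `I^{⌈α⌉-α}` maps `∑ d_k t^{α-k} / Γ(α-k+1) + I^α φ` to the Taylor
expansion of order `⌈α⌉` with the same `d` and `φ`, and its injectivity transports both existence
and uniqueness from `AC^{⌈α⌉}` to `X_α`.
-/

open Function
open scoped Convolution

section CausalConvolution

variable {f g k f' g' : ℝ → ℝ} {b : ℝ}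

lemma support_convolution_subset_Ici (hf : support f ⊆ Ici 0) (hg : support g ⊆ Ici 0) :
    support (f ⋆ g) ⊆ Ici 0 := by
  refine (support_convolution_subset _).trans ((add_subset_add hf hg).trans ?_)
  simpa using Ici_add_Ici_subset (0 : ℝ) 0

-- For functions supported on `[0, ∞)`, the convolution at `t ≤ b` only sees values on `(-∞, b]`,
-- so both factors may be truncated to `(-∞, b]`, which makes locally integrable ones integrable.
lemma convolution_integrand_congr_of_eqOn_Iic (hb : 0 ≤ b) (hf : support f ⊆ Ici 0)
    (hg : support g ⊆ Ici 0) (hff' : EqOn f f' (Iic b)) (hgg' : EqOn g g' (Iic b))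
    {t : ℝ} (ht : t ≤ b) (s : ℝ) : f s * g (t - s) = f' s * g' (t - s) := by
  have vanish {h h' : ℝ → ℝ} (hh : support h ⊆ Ici 0) (hhh' : EqOn h h' (Iic b)) {x : ℝ}
      (hx : x < 0) : h x = 0 ∧ h' x = 0 := by
    have hx0 : h x = 0 := notMem_support.1 fun hmem => hx.not_ge (hh hmem)
    exact ⟨hx0, hhh' (hx.le.trans hb) ▸ hx0⟩
  rcases lt_or_ge s 0 with hs | hs
  · simp only [vanish hf hff' hs, zero_mul]
  rcases lt_or_ge (t - s) 0 with hts | hts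
  · simp only [vanish hg hgg' hts, mul_zero]
  · rw [hff' (show s ≤ b by linarith), hgg' (show t - s ≤ b by linarith)]

lemma eqOn_convolution_Iic (hb : 0 ≤ b) (hf : support f ⊆ Ici 0) (hg : support g ⊆ Ici 0)
    (hff' : EqOn f f' (Iic b)) (hgg' : EqOn g g' (Iic b)) :
    EqOn (f ⋆ g) (f' ⋆ g') (Iic b) := fun _ ht =>
  integral_congr_ae <| .of_forall fun s =>
    convolution_integrand_congr_of_eqOn_Iic hb hf hg hff' hgg' ht s

lemma eqOn_indicator_Iic (f : ℝ → ℝ) (b : ℝ) : EqOn f ((Iic b).indicator f) (Iic b) :=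
  (eqOn_indicator (s := Iic b)).symm

lemma integrableOn_convolution_Iic (hb : 0 ≤ b) (hf : support f ⊆ Ici 0)
    (hg : support g ⊆ Ici 0) (hfi : IntegrableOn f (Iic b)) (hgi : IntegrableOn g (Iic b)) :
    IntegrableOn (f ⋆ g) (Iic b) := by
  rw [← integrable_indicator_iff measurableSet_Iic] at hfi hgi
  refine (hfi.integrable_convolution (.lsmul ℝ ℝ) hgi).integrableOn.congr_fun ?_ measurableSet_Iic
  exact (eqOn_convolution_Iic hb hf hg (eqOn_indicator_Iic f b) (eqOn_indicator_Iic g b)).symm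

lemma ae_convolutionExistsAt_of_integrableOn_Iic (hb : 0 ≤ b) (hf : support f ⊆ Ici 0)
    (hg : support g ⊆ Ici 0) (hfi : IntegrableOn f (Iic b)) (hgi : IntegrableOn g (Iic b)) :
    ∀ᵐ t ∂volume.restrict (Iic b), ConvolutionExistsAt f g t (.lsmul ℝ ℝ) := by
  rw [← integrable_indicator_iff measurableSet_Iic] at hfi hgi
  filter_upwards [ae_restrict_mem measurableSet_Iic,
    ae_restrict_of_ae (hfi.ae_convolution_exists (.lsmul ℝ ℝ) hgi)] with t ht hexists
  exact hexists.congr <| .of_forall fun s => (convolution_integrand_congr_of_eqOn_Iic hb hf hg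
    (eqOn_indicator_Iic f b) (eqOn_indicator_Iic g b) ht s).symm

lemma ae_convolution_assoc (hf : Integrable f) (hg : Integrable g) (hk : Integrable k) :
    (f ⋆ g) ⋆ k =ᵐ[volume] f ⋆ (g ⋆ k) := by
  filter_upwards [hf.norm.ae_convolution_exists (.mul ℝ ℝ)
    (hg.norm.integrable_convolution (.mul ℝ ℝ) hk.norm)] with t ht
  exact convolution_assoc _ _ _ _ (fun x y z => smul_assoc x y z) hf.1 hg.1 hk.1
    (hf.ae_convolution_exists _ hg) (hg.norm.ae_convolution_exists _ hk.norm) ht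

lemma ae_convolution_assoc_of_integrableOn_Iic (hb : 0 ≤ b) (hf : support f ⊆ Ici 0)
    (hg : support g ⊆ Ici 0) (hk : support k ⊆ Ici 0) (hfi : IntegrableOn f (Iic b))
    (hgi : IntegrableOn g (Iic b)) (hki : IntegrableOn k (Iic b)) :
    (f ⋆ g) ⋆ k =ᵐ[volume.restrict (Iic b)] f ⋆ (g ⋆ k) := by
  rw [← integrable_indicator_iff measurableSet_Iic] at hfi hgi hki
  have hleft := eqOn_convolution_Iic hb (support_convolution_subset_Ici hf hg) hk
    (eqOn_convolution_Iic hb hf hg (eqOn_indicator_Iic f b) (eqOn_indicator_Iic g b))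
    (eqOn_indicator_Iic k b)
  have hright := eqOn_convolution_Iic hb hf (support_convolution_subset_Ici hg hk)
    (eqOn_indicator_Iic f b)
    (eqOn_convolution_Iic hb hg hk (eqOn_indicator_Iic g b) (eqOn_indicator_Iic k b))
  filter_upwards [ae_restrict_mem measurableSet_Iic,
    ae_restrict_of_ae (ae_convolution_assoc hfi hgi hki)] with t ht hassoc
  rw [hleft ht, hassoc, hright ht]

end CausalConvolution

section ExtensionByZero

variable {f g : ℝ → ℝ} {b : ℝ}

lemma support_indicator_Ioi_subset_Ici (f : ℝ → ℝ) : support ((Ioi 0).indicator f) ⊆ Ici 0 :=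
  support_indicator_subset.trans Ioi_subset_Ici_self

lemma integrableOn_Iic_indicator_Ioi_iff :
    IntegrableOn ((Ioi 0).indicator f) (Iic b) ↔ IntegrableOn f (Icc 0 b) := by
  rw [integrableOn_indicator_iff measurableSet_Ioi, Ioi_inter_Iic,
    integrableOn_Icc_iff_integrableOn_Ioc]

lemma ae_eq_restrict_Icc_of_indicator_Ioi
    (h : (Ioi 0).indicator f =ᵐ[volume.restrict (Iic b)] (Ioi 0).indicator g) :
    f =ᵐ[volume.restrict (Icc 0 b)] g := by
  rw [← restrict_Ioc_eq_restrict_Icc]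
  filter_upwards [ae_restrict_mem measurableSet_Ioc,
    ae_restrict_of_ae_restrict_of_subset Ioc_subset_Iic_self h] with t ht hfg
  have ht0 : t ∈ Ioi 0 := ht.1
  rwa [indicator_of_mem ht0, indicator_of_mem ht0] at hfg

end ExtensionByZero

section FractionalIntegral

/-- The kernel `t ^ (γ - 1) / Γ(γ)` of the fractional integral of order `γ > 0`; these are the
normalized powers that fractional integration merely shifts, see `RL_powerKernel`. -/
noncomputable def powerKernel (γ : ℝ) : ℝ → ℝ := fun t => t ^ (γ - 1) / Real.Gamma γ

variable {f g : ℝ → ℝ} {b γ δ : ℝ}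

@[simp] lemma powerKernel_one : powerKernel 1 = 1 := by
  ext t; simp [powerKernel]

lemma integrableOn_powerKernel (hγ : 0 < γ) : IntegrableOn (powerKernel γ) (Icc 0 b) := by
  rw [integrableOn_Icc_iff_integrableOn_Ioc]
  exact (intervalIntegral.intervalIntegrable_rpow' (by linarith)).1.div_const _

@[simp] lemma RL_zero (f : ℝ → ℝ) : RL 0 f = f := by
  ext t; simp [RL]

lemma RL_one (f : ℝ → ℝ) (t : ℝ) : RL 1 f t = ∫ s in (0 : ℝ)..t, f s := by
  simp [RL]

lemma RL_smul (γ c : ℝ) (f : ℝ → ℝ) : RL γ (c • f) = c • RL γ f := by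
  ext t
  simp only [RL, Pi.smul_apply, smul_eq_mul, mul_left_comm _ c,
    intervalIntegral.integral_const_mul]
  split_ifs <;> rfl

lemma RL_congr_ae (h : f =ᵐ[volume.restrict (Icc 0 b)] g) :
    RL γ f =ᵐ[volume.restrict (Icc 0 b)] RL γ g := by
  by_cases hγ : γ = 0
  · simpa only [hγ, RL_zero] using h
  filter_upwards [ae_restrict_mem measurableSet_Icc] with t ht
  simp only [RL, if_neg hγ]
  congr 1
  refine intervalIntegral.integral_congr_ae_restrict ?_
  rw [uIoc_of_le ht.1]
  filter_upwards [ae_restrict_of_ae_restrict_of_subset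
    (Ioc_subset_Icc_self.trans (Icc_subset_Icc_right ht.2)) h] with s hs
  rw [hs]

lemma indicator_RL_eq_convolution (hγ : γ ≠ 0) (f : ℝ → ℝ) :
    (Ioi 0).indicator (RL γ f) = (Ioi 0).indicator f ⋆ (Ioi 0).indicator (powerKernel γ) := by
  rw [← posConvolution_eq_convolution_indicator _ _ _ volume, posConvolution]
  congr 1
  ext t
  rw [RL, if_neg hγ, ← intervalIntegral.integral_const_mul]
  congr 1
  ext s
  simp only [powerKernel, ContinuousLinearMap.lsmul_apply, smul_eq_mul]
  ring

lemma integrableOn_RL (hγ : 0 ≤ γ) (hf : IntegrableOn f (Icc 0 b)) :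
    IntegrableOn (RL γ f) (Icc 0 b) := by
  rcases hγ.eq_or_lt with rfl | hγ
  · rwa [RL_zero]
  rcases lt_or_ge b 0 with hb | hb
  · simp [hb]
  rw [← integrableOn_Iic_indicator_Ioi_iff] at hf ⊢
  rw [indicator_RL_eq_convolution hγ.ne']
  exact integrableOn_convolution_Iic hb (support_indicator_Ioi_subset_Ici _)
    (support_indicator_Ioi_subset_Ici _) hf
    (integrableOn_Iic_indicator_Ioi_iff.2 (integrableOn_powerKernel hγ))

lemma RL_add (hγ : 0 ≤ γ) (hf : IntegrableOn f (Icc 0 b)) (hg : IntegrableOn g (Icc 0 b)) :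
    RL γ (f + g) =ᵐ[volume.restrict (Icc 0 b)] RL γ f + RL γ g := by
  rcases hγ.eq_or_lt with rfl | hγ
  · simp only [RL_zero]; rfl
  rcases lt_or_ge b 0 with hb | hb
  · simp [hb, EventuallyEq]
  refine ae_eq_restrict_Icc_of_indicator_Ioi ?_
  have hexists {h : ℝ → ℝ} (hh : IntegrableOn h (Icc 0 b)) :=
    ae_convolutionExistsAt_of_integrableOn_Iic hb (support_indicator_Ioi_subset_Ici h)
      (support_indicator_Ioi_subset_Ici _) (integrableOn_Iic_indicator_Ioi_iff.2 hh)
      (integrableOn_Iic_indicator_Ioi_iff.2 (integrableOn_powerKernel hγ))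
  filter_upwards [hexists hf, hexists hg] with t hft hgt
  simp only [indicator_add', indicator_RL_eq_convolution hγ.ne']
  exact hft.add_distrib hgt

lemma RL_sum {ι : Type*} (hγ : 0 ≤ γ) (S : Finset ι) {F : ι → ℝ → ℝ}
    (hF : ∀ i ∈ S, IntegrableOn (F i) (Icc 0 b)) :
    RL γ (∑ i ∈ S, F i) =ᵐ[volume.restrict (Icc 0 b)] ∑ i ∈ S, RL γ (F i) := by
  classical
  induction S using Finset.induction_on with
  | empty => exact .of_eq (by ext t; simp [RL])
  | insert i S hi ih =>
    rw [Finset.forall_mem_insert] at hF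
    rw [Finset.sum_insert hi, Finset.sum_insert hi]
    exact (RL_add hγ hF.1 (integrable_finsetSum' S hF.2)).trans ((ae_eq_refl _).add (ih hF.2))

lemma integral_rpow_mul_sub_rpow {s t a : ℝ} (hs : 0 < s) (ht : 0 < t) (ha : 0 < a) :
    ∫ x in (0 : ℝ)..a, x ^ (s - 1) * (a - x) ^ (t - 1) =
      a ^ (s + t - 1) * (Real.Gamma s * Real.Gamma t / Real.Gamma (s + t)) := by
  have hbeta := Complex.betaIntegral_scaled s t ha
  rw [Complex.betaIntegral_eq_Gamma_mul_div _ _ (by simpa) (by simpa)] at hbeta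
  apply Complex.ofReal_injective
  calc ((∫ x in (0 : ℝ)..a, x ^ (s - 1) * (a - x) ^ (t - 1) : ℝ) : ℂ)
      = ∫ x in (0 : ℝ)..a, (x : ℂ) ^ ((s : ℂ) - 1) * ((a : ℂ) - x) ^ ((t : ℂ) - 1) := by
        rw [← intervalIntegral.integral_ofReal]
        refine intervalIntegral.integral_congr fun x hx => ?_
        rw [uIcc_of_le ha.le] at hx
        simp [Complex.ofReal_cpow hx.1, Complex.ofReal_cpow (sub_nonneg.2 hx.2)]
    _ = _ := by
        rw [hbeta]
        simp [Complex.ofReal_cpow ha.le, ← Complex.Gamma_ofReal]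

lemma RL_powerKernel (hγ : 0 ≤ γ) (hδ : 0 < δ) :
    EqOn (RL γ (powerKernel δ)) (powerKernel (γ + δ)) (Ioi 0) := by
  intro t ht
  rcases hγ.eq_or_lt with rfl | hγ
  · rw [RL_zero, zero_add]
  have hintegral : ∫ s in (0 : ℝ)..t, (t - s) ^ (γ - 1) * powerKernel δ s =
      (∫ s in (0 : ℝ)..t, s ^ (δ - 1) * (t - s) ^ (γ - 1)) / Real.Gamma δ := by
    rw [← intervalIntegral.integral_div]
    congr 1
    ext s
    rw [powerKernel]
    ring
  rw [RL, if_neg hγ.ne', hintegral, integral_rpow_mul_sub_rpow hδ hγ ht, powerKernel, add_comm γ δ]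
  have := (Real.Gamma_pos_of_pos hγ).ne'
  have := (Real.Gamma_pos_of_pos hδ).ne'
  field_simp

lemma RL_powerKernel_ae (hγ : 0 ≤ γ) (hδ : 0 < δ) :
    RL γ (powerKernel δ) =ᵐ[volume.restrict (Icc 0 b)] powerKernel (γ + δ) := by
  rw [← restrict_Ioc_eq_restrict_Icc]
  filter_upwards [ae_restrict_mem measurableSet_Ioc] with t ht using RL_powerKernel hγ hδ ht.1

lemma indicator_powerKernel_convolution (hγ : 0 < γ) (hδ : 0 < δ) :
    (Ioi 0).indicator (powerKernel δ) ⋆ (Ioi 0).indicator (powerKernel γ) =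
      (Ioi 0).indicator (powerKernel (γ + δ)) := by
  rw [← indicator_RL_eq_convolution hγ.ne']
  exact indicator_congr (RL_powerKernel hγ.le hδ)

theorem RL_RL (hγ : 0 ≤ γ) (hδ : 0 ≤ δ) (hf : IntegrableOn f (Icc 0 b)) :
    RL γ (RL δ f) =ᵐ[volume.restrict (Icc 0 b)] RL (γ + δ) f := by
  rcases hγ.eq_or_lt with rfl | hγ
  · rw [RL_zero, zero_add]
  rcases hδ.eq_or_lt with rfl | hδ
  · rw [RL_zero, add_zero]
  rcases lt_or_ge b 0 with hb | hb
  · simp [hb, EventuallyEq]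
  refine ae_eq_restrict_Icc_of_indicator_Ioi ?_
  rw [indicator_RL_eq_convolution hγ.ne', indicator_RL_eq_convolution hδ.ne',
    indicator_RL_eq_convolution (add_pos hγ hδ).ne', ← indicator_powerKernel_convolution hγ hδ]
  exact ae_convolution_assoc_of_integrableOn_Iic hb (support_indicator_Ioi_subset_Ici _)
    (support_indicator_Ioi_subset_Ici _) (support_indicator_Ioi_subset_Ici _)
    (integrableOn_Iic_indicator_Ioi_iff.2 hf)
    (integrableOn_Iic_indicator_Ioi_iff.2 (integrableOn_powerKernel hδ))
    (integrableOn_Iic_indicator_Ioi_iff.2 (integrableOn_powerKernel hγ))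

end FractionalIntegral

section Primitive

variable {b : ℝ} {n : ℕ} {f g : ℝ → ℝ}

lemma eq_and_ae_eq_of_const_add_integral_ae_eq (hb : 0 < b) {c c' : ℝ}
    (hf : IntegrableOn f (Icc 0 b)) (hg : IntegrableOn g (Icc 0 b))
    (h : (fun t => c + ∫ s in (0 : ℝ)..t, f s) =ᵐ[volume.restrict (Icc 0 b)]
      fun t => c' + ∫ s in (0 : ℝ)..t, g s) :
    c = c' ∧ f =ᵐ[volume.restrict (Icc 0 b)] g := by
  rw [← uIcc_of_le hb.le] at hf hg
  have hcont {u : ℝ → ℝ} (hu : IntegrableOn u (uIcc 0 b)) (d : ℝ) :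
      ContinuousOn (fun t => d + ∫ s in (0 : ℝ)..t, u s) (Icc 0 b) := by
    rw [← uIcc_of_le hb.le]
    exact (intervalIntegral.continuousOn_primitive_interval hu).const_add d
  have heqOn := Measure.eqOn_Icc_of_ae_eq volume hb.ne h (hcont hf c) (hcont hg c')
  refine ⟨by simpa using heqOn (left_mem_Icc.2 hb.le), ?_⟩
  have hderiv {u : ℝ → ℝ} (hu : IntegrableOn u (uIcc 0 b)) (d : ℝ) :
      ∀ᵐ t ∂volume.restrict (Icc 0 b),
        HasDerivAt (fun x => d + ∫ s in (0 : ℝ)..x, u s) (u t) t := by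
    filter_upwards [ae_restrict_mem measurableSet_Icc,
      ae_restrict_of_ae hu.intervalIntegrable.ae_hasDerivAt_integral] with t ht hut
    rw [← uIcc_of_le hb.le] at ht
    exact (hut ht 0 left_mem_uIcc).const_add d
  have hf' := hderiv hf c
  have hg' := hderiv hg c'
  rw [← restrict_Ioo_eq_restrict_Icc] at hf' hg' ⊢
  filter_upwards [ae_restrict_mem measurableSet_Ioo, hf', hg'] with t ht hft hgt
  exact hft.unique (hgt.congr_of_eventuallyEq
    (heqOn.eventuallyEq_of_mem (Icc_mem_nhds ht.1 ht.2)))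

lemma memAC_congr (hb : 0 ≤ b) (hfg : EqOn f g (Icc 0 b)) : MemAC b f ↔ MemAC b g := by
  refine exists_congr fun φ => and_congr_right fun _ => forall₂_congr fun t ht => ?_
  rw [hfg ht, hfg (left_mem_Icc.2 hb)]

lemma memACn_congr (hb : 0 ≤ b) (hfg : EqOn f g (Icc 0 b)) : MemACn b n f ↔ MemACn b n g :=
  and_congr (contDiffOn_congr hfg) (memAC_congr hb (iteratedDerivWithin_congr hfg))

lemma memACn_one_iff (hb : 0 ≤ b) :
    MemACn b 1 g ↔ ∃ (c : ℝ) (φ : ℝ → ℝ), IntegrableOn φ (Icc 0 b) ∧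
      EqOn g (fun t => c + ∫ s in (0 : ℝ)..t, φ s) (Icc 0 b) := by
  constructor
  · rintro ⟨-, φ, hφ, hg⟩
    exact ⟨g 0, φ, hφ, hg⟩
  · rintro ⟨c, φ, hφ, hg⟩
    refine (memACn_congr hb hg).2 ⟨?_, φ, hφ, by simp⟩
    rw [← uIcc_of_le hb] at hφ ⊢
    exact contDiffOn_zero.2 ((intervalIntegral.continuousOn_primitive_interval hφ).const_add c)

lemma memACn_add_two_iff_derivWithin (hb : 0 < b) :
    MemACn b (n + 2) g ↔ DifferentiableOn ℝ g (Icc 0 b) ∧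
      MemACn b (n + 1) (derivWithin g (Icc 0 b)) := by
  have hcontDiff : ContDiffOn ℝ (n + 1 : ℕ) g (Icc 0 b) ↔ DifferentiableOn ℝ g (Icc 0 b) ∧
      ContDiffOn ℝ n (derivWithin g (Icc 0 b)) (Icc 0 b) := by
    simp [contDiffOn_succ_iff_derivWithin (uniqueDiffOn_Icc hb)]
  simp only [MemACn, Nat.add_succ_sub_one, Nat.add_zero, hcontDiff, iteratedDerivWithin_succ',
    and_assoc]

lemma hasDerivWithinAt_const_add_integral (hf : ContinuousOn f (Icc 0 b)) (c : ℝ) {t : ℝ}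
    (ht : t ∈ Icc 0 b) :
    HasDerivWithinAt (fun x => c + ∫ s in (0 : ℝ)..x, f s) (f t) (Icc 0 b) t := by
  have : Fact (t ∈ Icc 0 b) := ⟨ht⟩
  exact (intervalIntegral.integral_hasDerivWithinAt_right
    ((hf.mono (Icc_subset_Icc_right ht.2)).intervalIntegrable_of_Icc ht.1)
    (hf.stronglyMeasurableAtFilter_nhdsWithin measurableSet_Icc t) (hf t ht)).const_add c

lemma memACn_add_two_iff (hb : 0 < b) :
    MemACn b (n + 2) g ↔ ∃ (c : ℝ) (h : ℝ → ℝ), MemACn b (n + 1) h ∧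
      EqOn g (fun t => c + ∫ s in (0 : ℝ)..t, h s) (Icc 0 b) := by
  constructor
  · rw [memACn_add_two_iff_derivWithin hb]
    rintro ⟨hdiff, hderiv⟩
    refine ⟨g 0, derivWithin g (Icc 0 b), hderiv, fun t ht => ?_⟩
    have hsub : Icc 0 t ⊆ Icc 0 b := Icc_subset_Icc_right ht.2
    have hFTC := intervalIntegral.integral_eq_sub_of_hasDerivAt_of_le ht.1
      (hdiff.continuousOn.mono hsub)
      (fun x hx => (hdiff x (hsub (Ioo_subset_Icc_self hx))).hasDerivWithinAt.hasDerivAt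
        (Icc_mem_nhds hx.1 (hx.2.trans_le ht.2)))
      ((hderiv.1.continuousOn.mono hsub).intervalIntegrable_of_Icc ht.1)
    simp only [hFTC, add_sub_cancel]
  · rintro ⟨c, h, hh, hg⟩
    rw [memACn_congr hb.le hg, memACn_add_two_iff_derivWithin hb]
    have hderiv (t) (ht : t ∈ Icc 0 b) :=
      hasDerivWithinAt_const_add_integral hh.1.continuousOn c ht
    exact ⟨fun t ht => (hderiv t ht).differentiableWithinAt, (memACn_congr hb.le fun t ht =>
      (hderiv t ht).derivWithin (uniqueDiffOn_Icc hb t ht)).2 hh⟩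

end Primitive

section FractionalTaylor

/-- The fractional Taylor expansion `∑_{k=1}^n d_k t^{α-k} / Γ(α-k+1) + I^α φ(t)` of order `α`.
The normalization makes `RL γ` act by replacing `α` with `γ + α`, with the same `d` and `φ`;
for `α = n` it is the Taylor expansion with integral remainder of a function with `n`-th derivative
`φ` whose derivative of order `n - k` at `0` is `d k`. -/
noncomputable def fracTaylor (α : ℝ) (n : ℕ) (d : ℕ → ℝ) (φ : ℝ → ℝ) : ℝ → ℝ :=
  ∑ k ∈ Finset.Icc 1 n, d k • powerKernel (α - k + 1) + RL α φ

variable {b α γ : ℝ} {n : ℕ} {d d' : ℕ → ℝ} {f φ φ' : ℝ → ℝ}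

lemma fracTaylor_congr (h : ∀ k ∈ Finset.Icc 1 n, d k = d' k) :
    fracTaylor α n d φ = fracTaylor α n d' φ := by
  rw [fracTaylor, Finset.sum_congr rfl fun k hk => by rw [h k hk], ← fracTaylor]

@[simp] lemma fracTaylor_zero_right (α : ℝ) (d : ℕ → ℝ) (φ : ℝ → ℝ) :
    fracTaylor α 0 d φ = RL α φ := by
  simp [fracTaylor]

lemma sub_add_one_pos_of_mem_Icc (hn : n < α + 1) {k : ℕ} (hk : k ∈ Finset.Icc 1 n) :
    0 < α - k + 1 := by
  have : (k : ℝ) ≤ n := mod_cast (Finset.mem_Icc.1 hk).2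
  linarith

lemma integrableOn_smul_powerKernel (hn : n < α + 1) (d : ℕ → ℝ) :
    ∀ k ∈ Finset.Icc 1 n, IntegrableOn (d k • powerKernel (α - k + 1)) (Icc 0 b) := fun k hk =>
  (integrableOn_powerKernel (sub_add_one_pos_of_mem_Icc hn hk)).smul (d k)

lemma integrableOn_fracTaylor (hα : 0 ≤ α) (hn : n < α + 1) (d : ℕ → ℝ)
    (hφ : IntegrableOn φ (Icc 0 b)) : IntegrableOn (fracTaylor α n d φ) (Icc 0 b) :=
  (integrable_finsetSum' _ (integrableOn_smul_powerKernel hn d)).add (integrableOn_RL hα hφ)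

theorem RL_fracTaylor (hγ : 0 ≤ γ) (hα : 0 ≤ α) (hn : n < α + 1) (d : ℕ → ℝ)
    (hφ : IntegrableOn φ (Icc 0 b)) :
    RL γ (fracTaylor α n d φ) =ᵐ[volume.restrict (Icc 0 b)] fracTaylor (γ + α) n d φ := by
  have hterm_int := integrableOn_smul_powerKernel (b := b) hn d
  have hterm (k) (hk : k ∈ Finset.Icc 1 n) : RL γ (d k • powerKernel (α - k + 1))
      =ᵐ[volume.restrict (Icc 0 b)] d k • powerKernel (γ + α - k + 1) := by
    rw [RL_smul, show γ + α - k + 1 = γ + (α - k + 1) by ring]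
    exact (RL_powerKernel_ae hγ (sub_add_one_pos_of_mem_Icc hn hk)).const_smul (d k)
  calc RL γ (fracTaylor α n d φ)
      =ᵐ[volume.restrict (Icc 0 b)]
        RL γ (∑ k ∈ Finset.Icc 1 n, d k • powerKernel (α - k + 1)) + RL γ (RL α φ) :=
        RL_add hγ (integrable_finsetSum' _ hterm_int) (integrableOn_RL hα hφ)
    _ =ᵐ[volume.restrict (Icc 0 b)]
        ∑ k ∈ Finset.Icc 1 n, RL γ (d k • powerKernel (α - k + 1)) + RL (γ + α) φ :=
        (RL_sum hγ _ hterm_int).add (RL_RL hγ hα hφ)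
    _ =ᵐ[volume.restrict (Icc 0 b)] fracTaylor (γ + α) n d φ :=
        (eventuallyEq_sum hterm).add (ae_eq_refl _)

lemma RL_sub_fracTaylor {β : ℝ} (hα : 0 ≤ α) (hαβ : α ≤ β) (hn : n < α + 1) (d : ℕ → ℝ)
    (hφ : IntegrableOn φ (Icc 0 b)) :
    RL (β - α) (fracTaylor α n d φ) =ᵐ[volume.restrict (Icc 0 b)] fracTaylor β n d φ := by
  simpa only [sub_add_cancel] using RL_fracTaylor (sub_nonneg.2 hαβ) hα hn d hφ

lemma fracTaylor_natCast_succ (d : ℕ → ℝ) (hφ : IntegrableOn φ (Icc 0 b)) :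
    fracTaylor (n + 1 : ℕ) (n + 1) d φ =ᵐ[volume.restrict (Icc 0 b)]
      fun t => d (n + 1) + ∫ s in (0 : ℝ)..t, fracTaylor n n d φ s := by
  have hsplit : fracTaylor (n + 1 : ℕ) (n + 1) d φ =
      fun t => d (n + 1) + fracTaylor (1 + n) n d φ t := by
    ext t
    simp only [fracTaylor, Finset.sum_Icc_succ_top (Nat.le_add_left 1 n), Nat.cast_succ, sub_self,
      zero_add, powerKernel_one, Pi.add_apply, Pi.smul_apply, Pi.one_apply, smul_eq_mul, mul_one,
      add_comm (n : ℝ) 1]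
    ring
  filter_upwards [RL_fracTaylor zero_le_one (Nat.cast_nonneg n) (lt_add_one _) d hφ] with t ht
  simp only [hsplit, ← ht, RL_one]

lemma integrableOn_fracTaylor_natCast (n : ℕ) (d : ℕ → ℝ) (hφ : IntegrableOn φ (Icc 0 b)) :
    IntegrableOn (fracTaylor n n d φ) (Icc 0 b) :=
  integrableOn_fracTaylor n.cast_nonneg (lt_add_one _) d hφ

lemma fracTaylor_natCast_injective (hb : 0 < b) (hφ : IntegrableOn φ (Icc 0 b))
    (hφ' : IntegrableOn φ' (Icc 0 b))
    (h : fracTaylor n n d φ =ᵐ[volume.restrict (Icc 0 b)] fracTaylor n n d' φ') :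
    (∀ k ∈ Finset.Icc 1 n, d k = d' k) ∧ φ =ᵐ[volume.restrict (Icc 0 b)] φ' := by
  induction n with
  | zero => simpa using h
  | succ n ih =>
    obtain ⟨hlast, hrest⟩ := eq_and_ae_eq_of_const_add_integral_ae_eq hb
      (integrableOn_fracTaylor_natCast n d hφ) (integrableOn_fracTaylor_natCast n d' hφ')
      ((fracTaylor_natCast_succ d hφ).symm.trans (h.trans (fracTaylor_natCast_succ d' hφ')))
    obtain ⟨hcoeff, hφφ'⟩ := ih hrest
    refine ⟨fun k hk => ?_, hφφ'⟩
    rw [← Finset.insert_Icc_right_eq_Icc_add_one (by lia), Finset.mem_insert] at hk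
    rcases hk with rfl | hk
    exacts [hlast, hcoeff k hk]

theorem RL_injective (hb : 0 < b) (hγ : 0 ≤ γ) (hφ : IntegrableOn φ (Icc 0 b))
    (hφ' : IntegrableOn φ' (Icc 0 b)) (h : RL γ φ =ᵐ[volume.restrict (Icc 0 b)] RL γ φ') :
    φ =ᵐ[volume.restrict (Icc 0 b)] φ' := by
  have hceil : 0 ≤ ⌈γ⌉₊ - γ := sub_nonneg.2 (Nat.le_ceil γ)
  have hRL : RL ⌈γ⌉₊ φ =ᵐ[volume.restrict (Icc 0 b)] RL ⌈γ⌉₊ φ' := by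
    rw [← sub_add_cancel (⌈γ⌉₊ : ℝ) γ]
    exact (RL_RL hceil hγ hφ).symm.trans ((RL_congr_ae h).trans (RL_RL hceil hγ hφ'))
  have htaylor (ψ : ℝ → ℝ) : fracTaylor ⌈γ⌉₊ ⌈γ⌉₊ 0 ψ = RL ⌈γ⌉₊ ψ := by simp [fracTaylor]
  rw [← htaylor, ← htaylor] at hRL
  exact (fracTaylor_natCast_injective hb hφ hφ' hRL).2

theorem fracTaylor_injective (hb : 0 < b) (hα : 0 ≤ α) (hn : n < α + 1)
    (hφ : IntegrableOn φ (Icc 0 b)) (hφ' : IntegrableOn φ' (Icc 0 b))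
    (h : fracTaylor α n d φ =ᵐ[volume.restrict (Icc 0 b)] fracTaylor α n d' φ') :
    (∀ k ∈ Finset.Icc 1 n, d k = d' k) ∧ φ =ᵐ[volume.restrict (Icc 0 b)] φ' := by
  refine fracTaylor_natCast_injective hb hφ hφ' ?_
  rcases le_total α n with hαn | hnα
  · exact (RL_sub_fracTaylor hα hαn hn d hφ).symm.trans
      ((RL_congr_ae h).trans (RL_sub_fracTaylor hα hαn hn d' hφ'))
  · have hRL (e : ℕ → ℝ) {ψ : ℝ → ℝ} (hψ : IntegrableOn ψ (Icc 0 b)) :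
        RL (α - n) (fracTaylor n n e ψ) =ᵐ[volume.restrict (Icc 0 b)] fracTaylor α n e ψ :=
      RL_sub_fracTaylor n.cast_nonneg hnα (lt_add_one _) e hψ
    exact RL_injective hb (sub_nonneg.2 hnα) (integrableOn_fracTaylor_natCast n d hφ)
      (integrableOn_fracTaylor_natCast n d' hφ') ((hRL d hφ).trans (h.trans (hRL d' hφ').symm))

lemma MemACn.exists_ae_eq_fracTaylor (hb : 0 < b) {g : ℝ → ℝ} (hg : MemACn b (n + 1) g) :
    ∃ (d : ℕ → ℝ) (φ : ℝ → ℝ), IntegrableOn φ (Icc 0 b) ∧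
      g =ᵐ[volume.restrict (Icc 0 b)] fracTaylor (n + 1 : ℕ) (n + 1) d φ := by
  induction n generalizing g with
  | zero =>
    obtain ⟨c, φ, hφ, hgφ⟩ := (memACn_one_iff hb.le).1 hg
    refine ⟨fun _ => c, φ, hφ, ?_⟩
    filter_upwards [ae_restrict_mem measurableSet_Icc,
      fracTaylor_natCast_succ (n := 0) (fun _ => c) hφ] with t ht htaylor
    rw [htaylor, hgφ ht]
    simp
  | succ n ih =>
    obtain ⟨c, h, hh, hgh⟩ := (memACn_add_two_iff hb).1 hg
    obtain ⟨d, φ, hφ, hd⟩ := ih hh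
    have hupdate : fracTaylor (n + 1 : ℕ) (n + 1) (update d (n + 2) c) φ =
        fracTaylor (n + 1 : ℕ) (n + 1) d φ :=
      fracTaylor_congr fun k hk => update_of_ne (by grind) c d
    refine ⟨update d (n + 2) c, φ, hφ, ?_⟩
    filter_upwards [ae_restrict_mem measurableSet_Icc, RL_congr_ae (γ := 1) hd,
      fracTaylor_natCast_succ (update d (n + 2) c) hφ] with t ht hRL htaylor
    rw [htaylor, hupdate, update_self, ← RL_one, ← hRL, RL_one, hgh ht]

lemma exists_memACn_ae_eq_fracTaylor (hb : 0 < b) (n : ℕ) (d : ℕ → ℝ)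
    (hφ : IntegrableOn φ (Icc 0 b)) :
    ∃ g : ℝ → ℝ, g =ᵐ[volume.restrict (Icc 0 b)] fracTaylor (n + 1 : ℕ) (n + 1) d φ ∧
      MemACn b (n + 1) g := by
  induction n with
  | zero =>
    refine ⟨_, (fracTaylor_natCast_succ d hφ).symm, (memACn_one_iff hb.le).2 ⟨d 1, φ, hφ, ?_⟩⟩
    simp [eqOn_refl]
  | succ n ih =>
    obtain ⟨h, hh, hmem⟩ := ih
    refine ⟨_, ?_, (memACn_add_two_iff hb).2 ⟨d (n + 2), h, hmem, eqOn_refl _ _⟩⟩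
    filter_upwards [RL_congr_ae (γ := 1) hh, fracTaylor_natCast_succ d hφ] with t hRL htaylor
    rw [htaylor, ← RL_one, ← RL_one, hRL]

theorem memX_iff_exists_ae_eq_fracTaylor (hb : 0 < b) (hα : 0 < α) :
    MemX b α f ↔ ∃ (d : ℕ → ℝ) (φ : ℝ → ℝ), IntegrableOn φ (Icc 0 b) ∧
      f =ᵐ[volume.restrict (Icc 0 b)] fracTaylor α ⌈α⌉₊ d φ := by
  have hn : ⌈α⌉₊ < α + 1 := Nat.ceil_lt_add_one hα.le
  have hceil : α ≤ ⌈α⌉₊ := Nat.le_ceil α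
  obtain ⟨m, hm⟩ : ∃ m, ⌈α⌉₊ = m + 1 := Nat.exists_eq_succ_of_ne_zero (Nat.ceil_pos.2 hα).ne'
  constructor
  · rintro ⟨hf, hg⟩
    obtain ⟨g, hgf, hg⟩ := hg hα.ne'
    obtain ⟨d, φ, hφ, hgd⟩ := (hm ▸ hg).exists_ae_eq_fracTaylor hb
    rw [← hm] at hgd
    exact ⟨d, φ, hφ, RL_injective hb (sub_nonneg.2 hceil) hf
      (integrableOn_fracTaylor hα.le hn d hφ)
      (hgf.symm.trans (hgd.trans (RL_sub_fracTaylor hα.le hceil hn d hφ).symm))⟩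
  · rintro ⟨d, φ, hφ, hfd⟩
    obtain ⟨g, hgd, hg⟩ := exists_memACn_ae_eq_fracTaylor hb m d hφ
    rw [← hm] at hgd hg
    have hRL := (RL_sub_fracTaylor hα.le hceil hn d hφ).symm.trans (RL_congr_ae hfd.symm)
    exact ⟨(integrableOn_fracTaylor hα.le hn d hφ).congr_fun_ae hfd.symm, fun _ =>
      ⟨g, hgd.trans hRL, hg⟩⟩

lemma sum_rpow_add_RL_eq_fracTaylor (hn : n < α + 1) (a : ℕ → ℝ) (φ : ℝ → ℝ) :
    (fun t => (∑ k ∈ Finset.Icc 1 n, a k * t ^ (α - k)) + RL α φ t) =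
      fracTaylor α n (fun k => a k * Real.Gamma (α - k + 1)) φ := by
  ext t
  simp only [fracTaylor, Pi.add_apply, Finset.sum_apply]
  congr 1
  refine Finset.sum_congr rfl fun k hk => ?_
  have := (Real.Gamma_pos_of_pos (sub_add_one_pos_of_mem_Icc hn hk)).ne'
  simp only [Pi.smul_apply, powerKernel, add_sub_cancel_right, smul_eq_mul]
  field_simp

end FractionalTaylor

/-- `X_α = ⟨t^{α-⌈α⌉}, …, t^{α-1}⟩ ⊕ I^α(L¹[0,b])`: every `f ∈ X_α` is, in exactly one way
(as an element of `L¹[0,b]`), a linear combination `∑_{k=1}^{⌈α⌉} a_k t^{α-k}` plus `I^α φ`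
with `φ ∈ L¹[0,b]`, and conversely every such function belongs to `X_α`. -/
theorem X_direct_sum (b : ℝ) (hb : 0 < b) (α : ℝ) (hα : 0 < α) :
    (∀ f : ℝ → ℝ, MemX b α f →
      ∃ (a : ℕ → ℝ) (φ : ℝ → ℝ), IntegrableOn φ (Set.Icc 0 b) volume ∧
        f =ᵐ[volume.restrict (Set.Icc 0 b)]
          (fun t => (∑ k ∈ Finset.Icc 1 ⌈α⌉₊, a k * t ^ (α - (k:ℝ))) + RL α φ t) ∧
        ∀ (a' : ℕ → ℝ) (φ' : ℝ → ℝ), IntegrableOn φ' (Set.Icc 0 b) volume →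
          f =ᵐ[volume.restrict (Set.Icc 0 b)]
            (fun t => (∑ k ∈ Finset.Icc 1 ⌈α⌉₊, a' k * t ^ (α - (k:ℝ))) + RL α φ' t) →
          (∀ k ∈ Finset.Icc 1 ⌈α⌉₊, a k = a' k) ∧
            φ =ᵐ[volume.restrict (Set.Icc 0 b)] φ') ∧
    ∀ (a : ℕ → ℝ) (φ : ℝ → ℝ), IntegrableOn φ (Set.Icc 0 b) volume →
      MemX b α (fun t => (∑ k ∈ Finset.Icc 1 ⌈α⌉₊, a k * t ^ (α - (k:ℝ))) + RL α φ t) := by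
  have hn : ⌈α⌉₊ < α + 1 := Nat.ceil_lt_add_one hα.le
  have hΓ (k) (hk : k ∈ Finset.Icc 1 ⌈α⌉₊) : Real.Gamma (α - k + 1) ≠ 0 :=
    (Real.Gamma_pos_of_pos (sub_add_one_pos_of_mem_Icc hn hk)).ne'
  simp only [sum_rpow_add_RL_eq_fracTaylor hn, memX_iff_exists_ae_eq_fracTaylor hb hα]
  refine ⟨fun f hf => ?_, fun a φ hφ => ⟨_, φ, hφ, ae_eq_refl _⟩⟩
  obtain ⟨d, φ, hφ, hfd⟩ := hf
  have hcancel : fracTaylor α ⌈α⌉₊ d φ = fracTaylor α ⌈α⌉₊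
      (fun k => d k / Real.Gamma (α - k + 1) * Real.Gamma (α - k + 1)) φ :=
    fracTaylor_congr fun k hk => (div_mul_cancel₀ _ (hΓ k hk)).symm
  rw [hcancel] at hfd
  refine ⟨fun k => d k / Real.Gamma (α - k + 1), φ, hφ, hfd, fun a' φ' hφ' hfa' => ?_⟩
  obtain ⟨hcoeff, hφφ'⟩ := fracTaylor_injective hb hα.le hn hφ hφ' (hfd.symm.trans hfa')
  exact ⟨fun k hk => mul_right_cancel₀ (hΓ k hk) (hcoeff k hk), hφφ'⟩
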